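/- Let n ≥ 1 and let Y be the n×n matrix over the polynomial ring ℤ[y_{ij} : 1 ≤ i ≤ j ≤ n] whose (i,j) entry is the indeterminate y_{ij} if i ≤ j and 0 if i > j. Let R, S ⊆ [n] with |R| = |S|. Then det(Y^R_S) ≠ 0 if and only if R ≤ S, i.e., if and only if for every 1 ≤ k ≤ |R| the k-th least element of R is at most the k-th least element of S. -/

import Mathlib

open MvPolynomial

/-- The generic `b × b` upper-triangular matrix: the `(i,j)` entry is the indeterminate
`y_{ij}` if `i ≤ j`, and `0` if `i > j`. -/
noncomputable def genY (b : ℕ) :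
    Matrix (Fin b) (Fin b) (MvPolynomial (Fin b × Fin b) ℤ) :=
  fun i j => if i ≤ j then X (i, j) else 0

/-- The square submatrix of `M` with rows indexed by `R` and columns indexed by `S`
(each arranged in increasing order). -/
def submat {b k : ℕ} {A : Type*} (M : Matrix (Fin b) (Fin b) A)
    (R S : Finset (Fin b)) (hR : R.card = k) (hS : S.card = k) : Matrix (Fin k) (Fin k) A :=
  fun a c => M (R.orderIsoOfFin hR a) (S.orderIsoOfFin hS c)

/-- Gale order: `R ≤ S` iff same cardinality and for each `k`, the `k`-th least element of `R`
is at most the `k`-th least element of `S`. -/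
def GaleLE {n : ℕ} (R S : Finset (Fin n)) : Prop :=
  R.card = S.card ∧ ∀ (k : ℕ) (hR : k < R.card) (hS : k < S.card),
    (R.orderIsoOfFin rfl ⟨k, hR⟩ : Fin n) ≤ (S.orderIsoOfFin rfl ⟨k, hS⟩ : Fin n)

/-!
A determinant of distinct indeterminates and zeros is nonzero exactly when some permutation avoids
the zeros: otherwise every Leibniz term vanishes, and if `σ` avoids them, then setting the
indeterminates at the positions of `σ` to `1` and the others to `0` gives a permutation matrix.
For `Y^R_S`, with `R = {r₁ < ⋯ < rₖ}` and `S = {s₁ < ⋯ < sₖ}`, such a `σ` satisfies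
`r_{σ i} ≤ s_i` for all `i`. By pigeonhole each `j` admits some `i ≤ j` with `j ≤ σ i`, whence
`r_j ≤ r_{σ i} ≤ s_i ≤ s_j`. So if any permutation avoids the zeros, the identity does.
-/

section LinearOrder

variable {ι α : Type*} [LinearOrder ι] [Preorder α]

theorem exists_le_and_le_apply_of_injOn {σ : ι → ι} {k : ι} (hk : (Set.Iic k).Finite)
    (hσ : Set.InjOn σ (Set.Iic k)) : ∃ i ≤ k, k ≤ σ i := by
  by_contra! hlt
  have hcard : (Set.Iic k).ncard ≤ (Set.Iio k).ncard :=
    Set.ncard_le_ncard_of_injOn σ hlt hσ (hk.subset Set.Iio_subset_Iic_self)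
  exact hcard.not_gt (Set.ncard_lt_ncard Set.Iio_ssubset_Iic_self hk)

theorem exists_perm_forall_apply_le_iff {f g : ι → α} (hfin : ∀ k : ι, (Set.Iic k).Finite)
    (hf : Monotone f) (hg : Monotone g) :
    (∃ σ : Equiv.Perm ι, ∀ i, f (σ i) ≤ g i) ↔ f ≤ g := by
  refine ⟨fun ⟨σ, hσ⟩ k ↦ ?_, fun hfg ↦ ⟨1, hfg⟩⟩
  obtain ⟨i, hik, hki⟩ := exists_le_and_le_apply_of_injOn (hfin k) σ.injective.injOn
  calc
    f k ≤ f (σ i) := hf hki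
    _ ≤ g i := hσ i
    _ ≤ g k := hg hik

end LinearOrder

section GenericMatrix

theorem exists_perm_forall_ne_zero_of_det_ne_zero {ι A : Type*} [Fintype ι] [DecidableEq ι]
    [CommRing A] {M : Matrix ι ι A} (hM : M.det ≠ 0) :
    ∃ σ : Equiv.Perm ι, ∀ i, M (σ i) i ≠ 0 := by
  rw [Matrix.det_apply] at hM
  obtain ⟨σ, -, hσ⟩ := Finset.exists_ne_zero_of_sum_ne_zero hM
  have hprod : ∏ i, M (σ i) i ≠ 0 := right_ne_zero_of_smul hσ
  exact ⟨σ, fun i hi ↦ hprod (Finset.prod_eq_zero (Finset.mem_univ i) hi)⟩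

/-- The generic matrix over `A` with support in the relation `p`: its `(i, j)` entry is the
indeterminate `X (i, j)` if `p i j`, and `0` otherwise. The indeterminates outside the support
belong to the polynomial ring but do not occur. -/
noncomputable def genericMatrix {m n : Type*} (A : Type*) [CommSemiring A] (p : m → n → Prop)
    [DecidableRel p] : Matrix m n (MvPolynomial (m × n) A) :=
  Matrix.of fun i j ↦ if p i j then X (i, j) else 0

variable {m n ι κ A : Type*} {p : m → n → Prop} [DecidableRel p]

theorem exists_eval_genericMatrix_submatrix_eq [CommSemiring A] {r : ι → m} {s : κ → n}
    (hr : Function.Injective r) (hs : Function.Injective s) (M : Matrix ι κ A)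
    (hM : ∀ i j, ¬ p (r i) (s j) → M i j = 0) :
    ∃ f : m × n → A, ((genericMatrix A p).submatrix r s).map (eval f) = M := by
  refine ⟨Function.extend (Prod.map r s) (Function.uncurry M) 0, Matrix.ext fun i j ↦ ?_⟩
  by_cases hij : p (r i) (s j)
  · simpa [genericMatrix, hij, Function.uncurry] using
      (hr.prodMap hs).extend_apply (Function.uncurry M) 0 (i, j)
  · simp [genericMatrix, hij, hM i j hij]

theorem det_genericMatrix_submatrix_ne_zero_iff [Fintype ι] [DecidableEq ι] [CommRing A]
    [Nontrivial A] {r : ι → m} {s : ι → n} (hr : Function.Injective r)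
    (hs : Function.Injective s) :
    ((genericMatrix A p).submatrix r s).det ≠ 0 ↔
      ∃ σ : Equiv.Perm ι, ∀ i, p (r (σ i)) (s i) := by
  constructor
  · intro hdet
    obtain ⟨σ, hσ⟩ := exists_perm_forall_ne_zero_of_det_ne_zero hdet
    exact ⟨σ, fun i ↦ by_contra fun hi ↦ hσ i (if_neg hi)⟩
  · rintro ⟨σ, hσ⟩ hdet
    have hsupport : ∀ i j, ¬ p (r i) (s j) → σ⁻¹.permMatrix A i j = 0 := by
      intro i j hij
      have hne : σ⁻¹ i ≠ j := fun h ↦ hij (by simpa [← h] using hσ (σ⁻¹ i))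
      exact if_neg (by simpa [eq_comm] using hne)
    obtain ⟨f, hf⟩ := exists_eval_genericMatrix_submatrix_eq hr hs (σ⁻¹.permMatrix A) hsupport
    have hperm : (σ⁻¹.permMatrix A).det = 0 := by
      rw [← hf, ← RingHom.mapMatrix_apply, ← RingHom.map_det, hdet, map_zero]
    have hunit : IsUnit (σ⁻¹.permMatrix A).det := by
      rw [Matrix.det_permutation]
      exact (Equiv.Perm.sign σ⁻¹).isUnit.map (Int.castRingHom A)
    exact hunit.ne_zero hperm

end GenericMatrix

theorem submat_genY_eq_genericMatrix_submatrix {n k : ℕ} {R S : Finset (Fin n)}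
    (hR : R.card = k) (hS : S.card = k) :
    submat (genY n) R S hR hS =
      (genericMatrix ℤ (· ≤ ·)).submatrix (R.orderEmbOfFin hR) (S.orderEmbOfFin hS) :=
  rfl

theorem galeLE_iff_orderEmbOfFin_le {n k : ℕ} {R S : Finset (Fin n)} (hR : R.card = k)
    (hS : S.card = k) :
    GaleLE R S ↔ ⇑(R.orderEmbOfFin hR) ≤ ⇑(S.orderEmbOfFin hS) := by
  subst hR
  have hcast (i : Fin R.card) (hi : (i : ℕ) < S.card) :
      S.orderEmbOfFin rfl ⟨i, hi⟩ = S.orderEmbOfFin hS i :=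
    Finset.orderEmbOfFin_eq_orderEmbOfFin_iff.mpr rfl
  constructor
  · rintro ⟨-, hle⟩ i
    have hi : (i : ℕ) < S.card := i.isLt.trans_eq hS.symm
    rw [← hcast i hi]
    exact hle i i.isLt hi
  · refine fun hle ↦ ⟨hS.symm, fun j hjR hjS ↦ ?_⟩
    calc
      R.orderEmbOfFin rfl ⟨j, hjR⟩ ≤ S.orderEmbOfFin hS ⟨j, hjR⟩ := hle ⟨j, hjR⟩
      _ = S.orderEmbOfFin rfl ⟨j, hjS⟩ := (hcast ⟨j, hjR⟩ hjS).symm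

theorem det_submat_ne_zero_iff_gale_general {ι α A : Type*} [Fintype ι] [LinearOrder ι]
    [Preorder α] [DecidableLE α] [CommRing A] [Nontrivial A] {r s : ι → α}
    (hr : StrictMono r) (hs : StrictMono s) :
    ((genericMatrix A (· ≤ · : α → α → Prop)).submatrix r s).det ≠ 0 ↔ r ≤ s := by
  rw [det_genericMatrix_submatrix_ne_zero_iff hr.injective hs.injective,
    exists_perm_forall_apply_le_iff (fun _ ↦ Set.toFinite _) hr.monotone hs.monotone]

/-- For the generic upper-triangular matrix `Y`, the minor `det(Y^R_S)` is nonzero if and only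
if `R ≤ S` in the Gale order. -/
theorem det_submat_ne_zero_iff_gale (n : ℕ) (hn : 1 ≤ n) (R S : Finset (Fin n))
    (h : R.card = S.card) :
    (submat (genY n) R S rfl h.symm).det ≠ 0 ↔ GaleLE R S := by
  rw [submat_genY_eq_genericMatrix_submatrix, galeLE_iff_orderEmbOfFin_le rfl h.symm]
  exact det_submat_ne_zero_iff_gale_general (R.orderEmbOfFin rfl).strictMono
    (S.orderEmbOfFin h.symm).strictMono
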